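/- Catoni-style PAC-Bayes bound with temperature: for losses in [0,1], any prior probability measure P on H, any fixed η > 0, any n ≥ 1, and any δ ∈ (0,1), with probability at least 1 − δ over n i.i.d. samples from D, simultaneously for every probability measure Q on H: E_{h∼Q}[R(h)] ≤ E_{h∼Q}[R̂_n(h)] + (KL(Q‖P) + log(1/δ))/η + η/(2n). -/

import Mathlib

/-!
For a loss in `[a, b]` and a fixed hypothesis, Hoeffding's lemma and independence bound the
exponential moment of `η` times the gap `R h - R̂ₙ h` by `exp (η² (b - a)² / (8n))`. The prior does
not depend on the sample, so by Tonelli's theorem the same bound holds for the expectation of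
`F zs = ∫ exp (η (R h - R̂ₙ h)) dP(h)`, and Markov's inequality makes `F` small with high
probability. On that single event the Donsker–Varadhan inequality
`∫ f dQ ≤ KL(Q‖P) + log ∫ exp f dP` yields the bound for all posteriors `Q` at once, because `F`
does not involve `Q`.
-/

open MeasureTheory ENNReal Classical

/-- Kullback–Leibler divergence `KL(Q‖P)`, valued in `ℝ≥0∞`: the integral of
the log-likelihood ratio when `Q ≪ P` and the ratio is integrable, `+∞`
otherwise. -/
noncomputable def klDiv' {H : Type*} [MeasurableSpace H] (Q P : Measure H) : ℝ≥0∞ :=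
  if Q ≪ P ∧ Integrable (llr Q P) Q then ENNReal.ofReal (∫ h, llr Q P h ∂Q) else ⊤

open ProbabilityTheory InformationTheory

section ChangeOfMeasure

variable {H : Type*} [MeasurableSpace H] {P Q : Measure H} [IsProbabilityMeasure P]
  [IsProbabilityMeasure Q]

lemma klDiv'_eq_klDiv : klDiv' Q P = klDiv Q P := by
  simp [klDiv', klDiv_def]

/-- The **Donsker–Varadhan inequality**: Gibbs' inequality for `Q` and the tilted measure
`exp f dP / ∫ exp f dP`. -/
lemma integral_le_toReal_klDiv_add_log_integral_exp {f : H → ℝ} (hQP : klDiv Q P ≠ ∞)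
    (hfQ : Integrable f Q) (hfP : Integrable (fun h ↦ Real.exp (f h)) P) :
    ∫ h, f h ∂Q ≤ (klDiv Q P).toReal + Real.log (∫ h, Real.exp (f h) ∂P) := by
  obtain ⟨hac, hllr⟩ := klDiv_ne_top_iff.1 hQP
  have := isProbabilityMeasure_tilted hfP
  have gibbs := integral_llr_add_sub_measure_univ_nonneg
    (hac.trans (absolutelyContinuous_tilted hfP)) (integrable_llr_tilted_right hac hfQ hllr hfP)
  rw [integral_llr_tilted_right hac hfQ hfP hllr] at gibbs
  rw [toReal_klDiv_of_measure_eq hac (by simp)]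
  simp only [probReal_univ] at gibbs
  linarith

end ChangeOfMeasure

section HighProbability

variable {Ω : Type*} [MeasurableSpace Ω] {μ : Measure Ω}

lemma integrable_exp_and_log_integral_exp_le [NeZero μ] {f : Ω → ℝ} (hf : AEMeasurable f μ) {c : ℝ}
    (hfc : ∫⁻ ω, ENNReal.ofReal (Real.exp (f ω)) ∂μ ≤ ENNReal.ofReal (Real.exp c)) :
    Integrable (fun ω ↦ Real.exp (f ω)) μ ∧ Real.log (∫ ω, Real.exp (f ω) ∂μ) ≤ c := by
  have hint : Integrable (fun ω ↦ Real.exp (f ω)) μ :=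
    (lintegral_ofReal_ne_top_iff_integrable hf.exp.aestronglyMeasurable
      (.of_forall fun ω ↦ (Real.exp_pos _).le)).1 (hfc.trans_lt ofReal_lt_top).ne
  refine ⟨hint, (Real.log_le_iff_le_exp (integral_exp_pos hint)).2 ?_⟩
  rwa [← ofReal_integral_eq_lintegral_ofReal hint (.of_forall fun ω ↦ (Real.exp_pos _).le),
    ENNReal.ofReal_le_ofReal_iff (Real.exp_pos c).le] at hfc

variable [IsProbabilityMeasure μ]

lemma ofReal_one_sub_le_measure_lt_div {F : Ω → ℝ≥0∞} (hF : AEMeasurable F μ) {C : ℝ≥0∞}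
    (hC₀ : C ≠ 0) (hC : C ≠ ∞) (hFC : ∫⁻ ω, F ω ∂μ ≤ C) {δ : ℝ} (hδ : 0 < δ) :
    ENNReal.ofReal (1 - δ) ≤ μ {ω | F ω < C / ENNReal.ofReal δ} := by
  have hδ₀ : ENNReal.ofReal δ ≠ 0 := (ENNReal.ofReal_pos.2 hδ).ne'
  have markov : μ {ω | F ω < C / ENNReal.ofReal δ}ᶜ ≤ ENNReal.ofReal δ := by
    simp only [Set.compl_ofPred, not_lt]
    calc μ {ω | C / ENNReal.ofReal δ ≤ F ω}
        ≤ (∫⁻ ω, F ω ∂μ) / (C / ENNReal.ofReal δ) :=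
          meas_ge_le_lintegral_div hF (ENNReal.div_ne_zero.2 ⟨hC₀, ofReal_ne_top⟩)
            (ENNReal.div_ne_top hC hδ₀)
      _ ≤ C / (C / ENNReal.ofReal δ) := ENNReal.div_le_div_right hFC _
      _ = ENNReal.ofReal δ := ENNReal.div_div_cancel hC₀ hC
  rw [ENNReal.ofReal_sub 1 hδ.le, ENNReal.ofReal_one, tsub_le_iff_right]
  calc 1 = μ Set.univ := measure_univ.symm
    _ ≤ μ {ω | F ω < C / ENNReal.ofReal δ} + μ {ω | F ω < C / ENNReal.ofReal δ}ᶜ :=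
      measure_univ_le_add_compl _
    _ ≤ μ {ω | F ω < C / ENNReal.ofReal δ} + ENNReal.ofReal δ := by gcongr

theorem pac_bayes_of_lintegral_exp_le {H : Type*} [MeasurableSpace H] {P : Measure H}
    [IsProbabilityMeasure P] {f : H → Ω → ℝ} (hf : Measurable (Function.uncurry f)) {c : ℝ}
    (hfc : ∀ᵐ h ∂P, ∫⁻ ω, ENNReal.ofReal (Real.exp (f h ω)) ∂μ ≤ ENNReal.ofReal (Real.exp c))
    {δ : ℝ} (hδ : 0 < δ) :
    ENNReal.ofReal (1 - δ) ≤ μ {ω | ∀ Q : Measure H, IsProbabilityMeasure Q → klDiv Q P ≠ ∞ →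
      Integrable (fun h ↦ f h ω) Q →
        ∫ h, f h ω ∂Q ≤ (klDiv Q P).toReal + (c + Real.log (1 / δ))} := by
  have hexp : Measurable fun p : H × Ω ↦ ENNReal.ofReal (Real.exp (f p.1 p.2)) :=
    hf.exp.ennreal_ofReal
  have hmean : ∫⁻ ω, ∫⁻ h, ENNReal.ofReal (Real.exp (f h ω)) ∂P ∂μ ≤
      ENNReal.ofReal (Real.exp c) := by
    rw [← lintegral_lintegral_swap hexp.aemeasurable]
    simpa using lintegral_mono_ae hfc
  refine (ofReal_one_sub_le_measure_lt_div hexp.lintegral_prod_left'.aemeasurable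
    (ENNReal.ofReal_pos.2 (Real.exp_pos c)).ne' ofReal_ne_top hmean hδ).trans
    (measure_mono fun ω hω Q _ hQP hfQ ↦ ?_)
  have hFω : ∫⁻ h, ENNReal.ofReal (Real.exp (f h ω)) ∂P ≤
      ENNReal.ofReal (Real.exp (c + Real.log (1 / δ))) := by
    rw [Real.exp_add, Real.exp_log (by positivity), mul_one_div, ENNReal.ofReal_div_of_pos hδ]
    exact le_of_lt hω
  obtain ⟨hfP, hlog⟩ := integrable_exp_and_log_integral_exp_le (f := fun h ↦ f h ω)
    (hf.comp measurable_prodMk_right).aemeasurable hFω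
  exact (integral_le_toReal_klDiv_add_log_integral_exp hQP hfQ hfP).trans (by gcongr)

end HighProbability

section Risk

variable {H Z : Type*}

/-- The empirical risk `R̂ₙ h` on the sample `zs`, the mean loss over its `n` points. -/
noncomputable def empiricalRisk (ℓ : H → Z → ℝ) {n : ℕ} (zs : Fin n → Z) (h : H) : ℝ :=
  (n : ℝ)⁻¹ * ∑ i, ℓ h (zs i)

variable {ℓ : H → Z → ℝ} {n : ℕ} {a b : ℝ}

lemma empiricalRisk_mem_Icc {h : H} (hab : ∀ z, ℓ h z ∈ Set.Icc a b) (hn : n ≠ 0)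
    (zs : Fin n → Z) : empiricalRisk ℓ zs h ∈ Set.Icc a b := by
  have := (convex_Icc a b).sum_mem (t := Finset.univ) (w := fun _ : Fin n ↦ (n : ℝ)⁻¹)
    (z := fun i ↦ ℓ h (zs i)) (fun _ _ ↦ by positivity) (by simp [hn]) fun i _ ↦ hab (zs i)
  simpa only [empiricalRisk, Finset.mul_sum, smul_eq_mul] using this

variable [MeasurableSpace Z]

/-- The true risk `R h = E_{z ∼ D}[ℓ h z]`. -/
noncomputable def risk (ℓ : H → Z → ℝ) (D : Measure Z) (h : H) : ℝ := ∫ z, ℓ h z ∂D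

variable {D : Measure Z}

lemma risk_mem_Icc [IsProbabilityMeasure D] {h : H} (hℓ : Measurable (ℓ h))
    (hab : ∀ z, ℓ h z ∈ Set.Icc a b) : risk ℓ D h ∈ Set.Icc a b :=
  (convex_Icc a b).integral_mem isClosed_Icc (.of_forall hab)
    (.of_mem_Icc a b hℓ.aemeasurable (.of_forall hab))

variable [MeasurableSpace H]

lemma measurable_risk [SFinite D] (hℓ : Measurable (Function.uncurry ℓ)) :
    Measurable (risk ℓ D) :=
  hℓ.stronglyMeasurable.integral_prod_right.measurable

lemma measurable_empiricalRisk (hℓ : Measurable (Function.uncurry ℓ)) :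
    Measurable fun p : H × (Fin n → Z) ↦ empiricalRisk ℓ p.2 p.1 :=
  (Finset.measurable_sum _ fun i _ ↦ hℓ.comp
    (measurable_fst.prodMk ((measurable_pi_apply i).comp measurable_snd))).const_mul _

lemma integrable_risk [IsProbabilityMeasure D] (hℓ : Measurable (Function.uncurry ℓ))
    (hab : ∀ h z, ℓ h z ∈ Set.Icc a b) (Q : Measure H) [IsFiniteMeasure Q] :
    Integrable (risk ℓ D) Q :=
  .of_mem_Icc a b (measurable_risk hℓ).aemeasurable
    (.of_forall fun h ↦ risk_mem_Icc hℓ.of_uncurry_left (hab h))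

lemma integrable_empiricalRisk (hℓ : Measurable (Function.uncurry ℓ))
    (hab : ∀ h z, ℓ h z ∈ Set.Icc a b) (hn : n ≠ 0) (zs : Fin n → Z) (Q : Measure H)
    [IsFiniteMeasure Q] : Integrable (empiricalRisk ℓ zs) Q :=
  .of_mem_Icc a b ((measurable_empiricalRisk hℓ).comp measurable_prodMk_right).aemeasurable
    (.of_forall fun h ↦ empiricalRisk_mem_Icc (hab h) hn zs)

end Risk

section Hoeffding

lemma lintegral_ofReal_exp_mul_le {Ω : Type*} [MeasurableSpace Ω] {μ : Measure Ω} {X : Ω → ℝ}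
    {c : NNReal} (hX : HasSubgaussianMGF X c μ) (t : ℝ) :
    ∫⁻ ω, ENNReal.ofReal (Real.exp (t * X ω)) ∂μ ≤ ENNReal.ofReal (Real.exp (c * t ^ 2 / 2)) := by
  rw [← ofReal_integral_eq_lintegral_ofReal (hX.integrable_exp_mul t)
    (.of_forall fun ω ↦ (Real.exp_pos _).le)]
  exact ENNReal.ofReal_le_ofReal (hX.mgf_le t)

variable {Z : Type*} [MeasurableSpace Z] {D : Measure Z} [IsProbabilityMeasure D]

lemma hasSubgaussianMGF_sum_pi {ι : Type*} [Fintype ι] {X : Z → ℝ} {c : NNReal}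
    (hX : HasSubgaussianMGF X c D) :
    HasSubgaussianMGF (fun zs : ι → Z ↦ ∑ i, X (zs i)) (Fintype.card ι * c)
      (Measure.pi fun _ ↦ D) := by
  have hcoord (i : ι) : HasSubgaussianMGF (fun zs : ι → Z ↦ X (zs i)) c (Measure.pi fun _ ↦ D) :=
    .of_map (measurable_pi_apply i).aemeasurable
      (by rwa [(measurePreserving_eval (fun _ : ι ↦ D) i).map_eq])
  simpa using HasSubgaussianMGF.sum_of_iIndepFun (iIndepFun_pi fun _ ↦ hX.aemeasurable)
    (s := Finset.univ) fun i _ ↦ hcoord i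

lemma lintegral_exp_mul_risk_sub_empiricalRisk_le {H : Type*} {ℓ : H → Z → ℝ} {h : H}
    (hℓ : Measurable (ℓ h)) {a b : ℝ} (hab : ∀ z, ℓ h z ∈ Set.Icc a b) {n : ℕ} (hn : n ≠ 0)
    (η : ℝ) :
    ∫⁻ zs, ENNReal.ofReal (Real.exp (η * (risk ℓ D h - empiricalRisk ℓ zs h)))
        ∂(Measure.pi fun _ : Fin n ↦ D) ≤
      ENNReal.ofReal (Real.exp (η ^ 2 * (b - a) ^ 2 / (8 * n))) := by
  have hoeffding : HasSubgaussianMGF (fun z ↦ ℓ h z - risk ℓ D h) ((‖b - a‖₊ / 2) ^ 2) D :=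
    hasSubgaussianMGF_of_mem_Icc hℓ.aemeasurable (.of_forall hab)
  have hgap (zs : Fin n → Z) : η * (risk ℓ D h - empiricalRisk ℓ zs h) =
      -(η / n) * ∑ i, (ℓ h (zs i) - risk ℓ D h) := by
    simp only [empiricalRisk, Finset.sum_sub_distrib, Finset.sum_const, Finset.card_univ,
      Fintype.card_fin, nsmul_eq_mul]
    field_simp
    ring
  simp_rw [hgap]
  refine (lintegral_ofReal_exp_mul_le (hasSubgaussianMGF_sum_pi hoeffding) _).trans_eq ?_
  congr 2
  simp only [Fintype.card_fin, NNReal.coe_mul, NNReal.coe_natCast, NNReal.coe_pow,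
    NNReal.coe_div, coe_nnnorm, NNReal.coe_ofNat, Real.norm_eq_abs, div_pow, sq_abs]
  field_simp
  ring

end Hoeffding

lemma ofReal_le_add_div_add {x y l η c : ℝ} {K : ℝ≥0∞} (hη : 0 < η)
    (h : K ≠ ∞ → x ≤ y + (K.toReal + l) / η + c) :
    ENNReal.ofReal x ≤ ENNReal.ofReal y + (K + ENNReal.ofReal l) / ENNReal.ofReal η +
      ENNReal.ofReal c := by
  obtain rfl | hK := eq_or_ne K ∞
  · simp [ENNReal.top_div]
  calc ENNReal.ofReal x
      ≤ ENNReal.ofReal (y + (K.toReal + l) / η + c) := ENNReal.ofReal_le_ofReal (h hK)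
    _ ≤ ENNReal.ofReal y + ENNReal.ofReal ((K.toReal + l) / η) + ENNReal.ofReal c :=
      ENNReal.ofReal_add_le.trans (by gcongr; exact ENNReal.ofReal_add_le)
    _ ≤ _ := by
      rw [ENNReal.ofReal_div_of_pos hη]
      gcongr
      exact ENNReal.ofReal_add_le.trans_eq (by rw [ENNReal.ofReal_toReal hK])

theorem catoni_pac_bayes_general {H Z : Type*} [MeasurableSpace H] [MeasurableSpace Z]
    {ℓ : H → Z → ℝ} (hℓ : Measurable (Function.uncurry ℓ)) {a b : ℝ}
    (hab : ∀ h z, ℓ h z ∈ Set.Icc a b) (P : Measure H) [IsProbabilityMeasure P]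
    (D : Measure Z) [IsProbabilityMeasure D] {η : ℝ} (hη : 0 < η) {n : ℕ} (hn : n ≠ 0)
    {δ : ℝ} (hδ : 0 < δ) :
    ENNReal.ofReal (1 - δ) ≤
      (Measure.pi fun _ : Fin n ↦ D)
        {zs | ∀ Q : Measure H, IsProbabilityMeasure Q → klDiv Q P ≠ ∞ →
          ∫ h, risk ℓ D h ∂Q ≤ ∫ h, empiricalRisk ℓ zs h ∂Q +
            ((klDiv Q P).toReal + Real.log (1 / δ)) / η + η * (b - a) ^ 2 / (8 * n)} := by
  have hgap : Measurable (Function.uncurry fun h (zs : Fin n → Z) ↦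
      η * (risk ℓ D h - empiricalRisk ℓ zs h)) :=
    (((measurable_risk hℓ).comp measurable_fst).sub (measurable_empiricalRisk hℓ)).const_mul η
  have hmgf (h : H) := lintegral_exp_mul_risk_sub_empiricalRisk_le (D := D)
    hℓ.of_uncurry_left (hab h) hn η
  refine (pac_bayes_of_lintegral_exp_le hgap (ae_of_all P hmgf) hδ).trans
    (measure_mono fun zs hzs Q hQ hQP ↦ ?_)
  have hR := integrable_risk (D := D) hℓ hab Q
  have hR' := integrable_empiricalRisk hℓ hab hn zs Q
  have hbound := hzs Q hQ hQP ((hR.sub hR').const_mul η)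
  rw [integral_const_mul, integral_sub hR hR', ← le_div_iff₀' hη] at hbound
  calc ∫ h, risk ℓ D h ∂Q
      ≤ ∫ h, empiricalRisk ℓ zs h ∂Q + ((klDiv Q P).toReal +
          (η ^ 2 * (b - a) ^ 2 / (8 * n) + Real.log (1 / δ))) / η := by linarith
    _ = _ := by field_simp; ring

/-- Catoni-style PAC-Bayes bound with temperature: for losses in `[0,1]`,
prior `P`, fixed `η > 0`, `n ≥ 1`, `δ ∈ (0,1)`, with probability at least
`1 − δ` over `n` i.i.d. samples from `D`, simultaneously for every posterior
probability measure `Q`: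
`E_{h∼Q}[R h] ≤ E_{h∼Q}[R̂_n h] + (KL(Q‖P) + log (1/δ))/η + η/(2n)`. -/
theorem catoni_pac_bayes {H Z : Type*} [MeasurableSpace H] [MeasurableSpace Z]
    (ℓ : H → Z → ℝ) (hℓmeas : Measurable (Function.uncurry ℓ))
    (hℓbd : ∀ h z, ℓ h z ∈ Set.Icc (0:ℝ) 1)
    (P : Measure H) [IsProbabilityMeasure P]
    (D : Measure Z) [IsProbabilityMeasure D]
    (η : ℝ) (hη : 0 < η)
    (n : ℕ) (hn : 1 ≤ n) (δ : ℝ) (hδ0 : 0 < δ) (hδ1 : δ < 1) :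
    ENNReal.ofReal (1 - δ) ≤
      (Measure.pi fun _ : Fin n => D)
        {zs | ∀ Q : Measure H, IsProbabilityMeasure Q →
          ENNReal.ofReal (∫ h, (∫ z, ℓ h z ∂D) ∂Q) ≤
            ENNReal.ofReal (∫ h, ((n : ℝ)⁻¹ * ∑ i, ℓ h (zs i)) ∂Q) +
              (klDiv' Q P + ENNReal.ofReal (Real.log (1 / δ))) / ENNReal.ofReal η +
              ENNReal.ofReal (η / (2 * n))} := by
  refine (catoni_pac_bayes_general hℓmeas hℓbd P D hη (Nat.one_le_iff_ne_zero.1 hn) hδ0).trans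
    (measure_mono fun zs hzs Q hQ ↦ ?_)
  rw [klDiv'_eq_klDiv]
  refine ofReal_le_add_div_add hη fun hQP ↦ (hzs Q hQ hQP).trans (add_le_add le_rfl ?_)
  rw [sub_zero, one_pow, mul_one]
  gcongr
  norm_num
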